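/- Unconditional energy dissipation of the second-order (BDF2) structure-preserving IVS scheme (Theorem 3.3, second part): let τ, M, λ, ν, ε, δ₀ > 0, β ≥ 0, and γ*, R^{n−1}, Rⁿ, R^{n+1} ∈ ℝ. Let φ^{n−1}, φⁿ, φ^{n+1}, μ^{n−1}, μⁿ, μ^{n+1}, p^{n−1}, pⁿ : ℝ^d → ℝ and u^{n−1}, uⁿ, u^{n+1}, û^{n+1} : ℝ^d → ℝ^d all be C², and let p^{n+1} : ℝ^d → ℝ be C¹. Write w* := 2wⁿ − w^{n−1} for w ∈ {φ, μ, u, p, R}. Assume E₁(φ*) + δ₀ > 0 and ξ^{n+1} = R^{n+1}/√(E₁(φ*) + δ₀). Assume, pointwise on Ω: (i) (3φ^{n+1} − 4φⁿ + φ^{n−1})/(2τ) + ξ^{n+1}∇·(u*φ*) = MΔμ^{n+1}; (ii) μ^{n+1} = −λΔφ^{n+1} + λβφ^{n+1} + λξ^{n+1}F′(φ*); (iii) (3û^{n+1} − 4uⁿ + u^{n−1})/(2τ) + ξ^{n+1}u*·∇u* − νΔû^{n+1} = −ξ^{n+1}(φ*∇μ* + γ*∇p*); (iv) (3/(2τ))(u^{n+1}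 − û^{n+1}) − νΔ(u^{n+1} − û^{n+1}) + ∇p^{n+1} = γ*∇p*; (v) ∇·u^{n+1} = ∇·uⁿ = ∇·u^{n−1} = 0; together with the boundary conditions ∂ₙφ^{n+1} = ∂ₙμ^{n+1} = 0 on ∂Ω and û^{n+1} = u^{n+1} = uⁿ = u^{n−1} = 0 on ∂Ω, and the scalar relation (3R^{n+1} − 4Rⁿ + R^{n−1})/(2τ) = [λ(F′(φ*), (3φ^{n+1} − 4φⁿ + φ^{n−1})/(2τ)) + (μ^{n+1}, ∇·(u*φ*)) + (û^{n+1}, φ*∇μ*) + b(u*, u*, û^{n+1}) + γ*(∇p*, û^{n+1})]/(2λ√(E₁(φ*) + δ₀)). Define Ẽ^{n+1} = ¼(‖u^{n+1}‖² + ‖2u^{n+1} − uⁿ‖²) + (λ/4)(‖∇φ^{n+1}‖² + ‖∇(2φ^{n+1} − φⁿ)‖²) + (λβ/4)(‖φ^{n+1}‖² + ‖2φ^{n+1} − φⁿ‖²) + (λ/2)((R^{n+1})² + (2R^{n+1} − Rⁿ)²) + (ντ/6)‖∇u^{n+1}‖², and Ẽⁿ by the same formula with the index pair (n+1, n) replaced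 by (n, n−1). Then Ẽ^{n+1} − Ẽⁿ ≤ −Mτ‖∇μ^{n+1}‖² − (ντ/6)(‖∇(u^{n+1} − û^{n+1})‖² + ‖∇û^{n+1}‖²). -/

import Mathlib

open MeasureTheory Finset

noncomputable section

/-- Partial derivative of `f` in coordinate direction `i`. -/
def pd {d : ℕ} (i : Fin d) (f : (Fin d → ℝ) → ℝ) (x : Fin d → ℝ) : ℝ :=
  fderiv ℝ f x (Pi.single i 1)

/-- Divergence of a vector field. -/
def vdiv {d : ℕ} (u : (Fin d → ℝ) → Fin d → ℝ) (x : Fin d → ℝ) : ℝ :=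
  ∑ i, pd i (fun y => u y i) x

/-- Laplacian. -/
def lap {d : ℕ} (f : (Fin d → ℝ) → ℝ) (x : Fin d → ℝ) : ℝ :=
  ∑ i, pd i (pd i f) x

/-- Convection term `(u·∇)v`, component `i`. -/
def convect {d : ℕ} (u v : (Fin d → ℝ) → Fin d → ℝ) (x : Fin d → ℝ) (i : Fin d) : ℝ :=
  ∑ j, u x j * pd j (fun y => v y i) x

/-- Trilinear form `b(u,v,w) = ∫_Ω (u·∇v)·w dx`. -/
def trib {d : ℕ} (Ω : Set (Fin d → ℝ)) (u v w : (Fin d → ℝ) → Fin d → ℝ) : ℝ :=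
  ∫ x in Ω, ∑ i, convect u v x i * w x i

/-- Homogeneous Neumann boundary condition on the box `[a,b]`. -/
def neumannBC {d : ℕ} (a b : Fin d → ℝ) (f : (Fin d → ℝ) → ℝ) : Prop :=
  ∀ i : Fin d, ∀ x ∈ Set.Icc a b, (x i = a i ∨ x i = b i) → pd i f x = 0

/-- `F(s) = G(s) - (β/2)s²` with `G(s) = (1-s²)²/(4ε²)`. -/
def Ffun (ε β s : ℝ) : ℝ := (1 - s^2)^2 / (4 * ε^2) - (β / 2) * s^2

/-- `F′(s) = (s³ - s)/ε² - βs`. -/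
def Fprime (ε β s : ℝ) : ℝ := (s^3 - s) / ε^2 - β * s

/-- `E₁(φ) = ∫_Ω F(φ) dx`. -/
def E1 {d : ℕ} (Ω : Set (Fin d → ℝ)) (ε β : ℝ) (φ : (Fin d → ℝ) → ℝ) : ℝ :=
  ∫ x in Ω, Ffun ε β (φ x)

/-- Second-order extrapolation `w* = 2wⁿ - w^{n-1}` for scalar functions. -/
def sstar {d : ℕ} (f g : (Fin d → ℝ) → ℝ) : (Fin d → ℝ) → ℝ :=
  fun x => 2 * f x - g x

/-- Second-order extrapolation `w* = 2wⁿ - w^{n-1}` for vector fields. -/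
def vstar {d : ℕ} (u v : (Fin d → ℝ) → Fin d → ℝ) : (Fin d → ℝ) → Fin d → ℝ :=
  fun x i => 2 * u x i - v x i

/-! The two-level terms of the modified energy are squared G-norms of BDF2 in `L²(Ω)` and `ℝ`, and
the increment of a squared G-norm is at most half the inner product of `3u - 4v + w` with the newest
level `u`. The Cahn–Hilliard equations are tested with `μⁿ⁺¹` and with the difference quotient of
`φ`, the predictor with `ûⁿ⁺¹`, and the scalar relation with `Rⁿ⁺¹`; the explicit terms then cancel
whatever the extrapolated fields are. Testing the correction step with the divergence-free fields
`uⁿ⁺¹` and `uⁿ` removes the pressure and trades `uⁿ⁺¹ - ûⁿ⁺¹` for gradients, which is why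
`(ντ/6) ‖∇uⁿ⁺¹‖²` enters the energy. -/

section Hilbert

open scoped RealInnerProductSpace

variable {H K : Type*} [NormedAddCommGroup H] [InnerProductSpace ℝ H]
  [NormedAddCommGroup K] [InnerProductSpace ℝ K]

/-- The square of Dahlquist's G-norm of the BDF2 method, as a function of two consecutive time
levels (the newer one first); all two-level terms of the modified energy are multiples of it. -/
def bdf2Energy (u v : H) : ℝ := (‖u‖ ^ 2 + ‖(2 : ℝ) • u - v‖ ^ 2) / 4

lemma bdf2Energy_sub_eq (u v w : H) :
    bdf2Energy u v - bdf2Energy v w =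
      ⟪(3 : ℝ) • u - (4 : ℝ) • v + w, u⟫ / 2 - ‖u - (2 : ℝ) • v + w‖ ^ 2 / 4 := by
  simp only [bdf2Energy, ← real_inner_self_eq_norm_sq, inner_add_left, inner_add_right,
    inner_sub_left, inner_sub_right, real_inner_smul_left, real_inner_smul_right,
    real_inner_comm u v, real_inner_comm u w, real_inner_comm v w]
  ring

lemma bdf2Energy_sub_le (u v w : H) :
    bdf2Energy u v - bdf2Energy v w ≤ ⟪(3 : ℝ) • u - (4 : ℝ) • v + w, u⟫ / 2 := by
  rw [bdf2Energy_sub_eq]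
  linarith [sq_nonneg ‖u - (2 : ℝ) • v + w‖]

lemma bdf2Energy_sub_le_of_phaseField {τ M lam β ξ : ℝ} (hτ : 0 < τ) (hlam : 0 ≤ lam) (hβ : 0 ≤ β)
    {φ ψ χ μ f g Δφ Δμ : H} {Dφ Dψ Dχ Dμ : K}
    (hφ : (2 * τ)⁻¹ • ((3 : ℝ) • φ - (4 : ℝ) • ψ + χ) + ξ • g = M • Δμ)
    (hμ : μ = -lam • Δφ + (lam * β) • φ + (lam * ξ) • f)
    (green_φ : ⟪Δφ, φ⟫ = -⟪Dφ, Dφ⟫) (green_ψ : ⟪Δφ, ψ⟫ = -⟪Dφ, Dψ⟫)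
    (green_χ : ⟪Δφ, χ⟫ = -⟪Dφ, Dχ⟫) (green_μ : ⟪Δμ, μ⟫ = -⟪Dμ, Dμ⟫) :
    lam * (bdf2Energy Dφ Dψ - bdf2Energy Dψ Dχ) + lam * β * (bdf2Energy φ ψ - bdf2Energy ψ χ) ≤
      -(M * τ) * ‖Dμ‖ ^ 2
        - τ * ξ * (lam * ⟪f, (2 * τ)⁻¹ • ((3 : ℝ) • φ - (4 : ℝ) • ψ + χ)⟫ + ⟪g, μ⟫) := by
  set P : H := (2 * τ)⁻¹ • ((3 : ℝ) • φ - (4 : ℝ) • ψ + χ) with hP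
  have hbdf : (3 : ℝ) • φ - (4 : ℝ) • ψ + χ = (2 * τ) • P := by
    rw [hP, smul_inv_smul₀ (by positivity)]
  have gradient_part : ⟪(3 : ℝ) • Dφ - (4 : ℝ) • Dψ + Dχ, Dφ⟫ = -(2 * τ) * ⟪Δφ, P⟫ := by
    have := congrArg (⟪Δφ, ·⟫) hbdf
    simp only [inner_add_right, inner_sub_right, real_inner_smul_right, green_φ, green_ψ,
      green_χ] at this
    rw [real_inner_comm, inner_add_right, inner_sub_right, real_inner_smul_right,
      real_inner_smul_right]
    linarith
  have mass_part : ⟪(3 : ℝ) • φ - (4 : ℝ) • ψ + χ, φ⟫ = 2 * τ * ⟪φ, P⟫ := by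
    rw [hbdf, real_inner_smul_left, real_inner_comm]
  have tested_μ : ⟪μ, P⟫ = -lam * ⟪Δφ, P⟫ + lam * β * ⟪φ, P⟫ + lam * ξ * ⟪f, P⟫ := by
    rw [hμ]
    simp only [inner_add_left, real_inner_smul_left]
  have tested_φ : ⟪μ, P⟫ + ξ * ⟪g, μ⟫ = -M * ‖Dμ‖ ^ 2 := by
    have := congrArg (⟪·, μ⟫) hφ
    simp only [inner_add_left, real_inner_smul_left, green_μ, real_inner_self_eq_norm_sq] at this
    rw [real_inner_comm]
    linarith
  calc lam * (bdf2Energy Dφ Dψ - bdf2Energy Dψ Dχ) + lam * β * (bdf2Energy φ ψ - bdf2Energy ψ χ)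
      ≤ lam * (-(2 * τ) * ⟪Δφ, P⟫ / 2) + lam * β * (2 * τ * ⟪φ, P⟫ / 2) := by
        rw [← gradient_part, ← mass_part]
        gcongr <;> exact bdf2Energy_sub_le ..
    _ = -(M * τ) * ‖Dμ‖ ^ 2 - τ * ξ * (lam * ⟪f, P⟫ + ⟪g, μ⟫) := by
        linear_combination τ * tested_φ - τ * tested_μ

/-- With `e = u - h` and the orthogonality relations turned into gradient terms, the gap between the
two sides is `‖u - 2v + w - e‖² / 4 + 5 ‖e‖² / 4 + (ντ/6) (‖Dv - 2De‖² + 4 ‖Du‖²)`. -/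
lemma bdf2Energy_sub_le_of_projection {τ ν : ℝ} (hτ : 0 < τ) (hν : 0 ≤ ν)
    {u v w h : H} {Du Dv Dh : K}
    (orth_u : 3 / (2 * τ) * ⟪u - h, u⟫ + ν * ⟪Du - Dh, Du⟫ = 0)
    (orth_v : 3 / (2 * τ) * ⟪u - h, v⟫ + ν * ⟪Du - Dh, Dv⟫ = 0) :
    bdf2Energy u v - bdf2Energy v w
        + ν * τ / 6 * (‖Du‖ ^ 2 - ‖Dv‖ ^ 2 + ‖Du - Dh‖ ^ 2 + ‖Dh‖ ^ 2) ≤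
      ⟪(3 : ℝ) • h - (4 : ℝ) • v + w, h⟫ / 2 + ν * τ * ‖Dh‖ ^ 2 := by
  obtain ⟨e, rfl⟩ : ∃ e, h = u - e := ⟨u - h, by abel⟩
  obtain ⟨De, rfl⟩ : ∃ De, Dh = Du - De := ⟨Du - Dh, by abel⟩
  rw [sub_sub_cancel, sub_sub_cancel] at orth_u orth_v
  have mass_u : ⟪e, u⟫ = -(2 * ν * τ / 3) * ⟪De, Du⟫ := by
    field_simp at orth_u ⊢
    linarith
  have mass_v : ⟪e, v⟫ = -(2 * ν * τ / 3) * ⟪De, Dv⟫ := by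
    field_simp at orth_v ⊢
    linarith
  have mass_gap : bdf2Energy u v - bdf2Energy v w
      - ⟪(3 : ℝ) • (u - e) - (4 : ℝ) • v + w, u - e⟫ / 2 =
      5 / 2 * ⟪e, u⟫ - ⟪e, v⟫ - 5 / 4 * ‖e‖ ^ 2 - ‖u - (2 : ℝ) • v + w - e‖ ^ 2 / 4 := by
    rw [bdf2Energy_sub_eq]
    simp only [← real_inner_self_eq_norm_sq, inner_add_left, inner_add_right,
      inner_sub_left, inner_sub_right, real_inner_smul_left, real_inner_smul_right,
      real_inner_comm e u, real_inner_comm e v, real_inner_comm e w]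
    ring
  have gradient_gap : ‖Du‖ ^ 2 - ‖Dv‖ ^ 2 + ‖De‖ ^ 2 + ‖Du - De‖ ^ 2 - 6 * ‖Du - De‖ ^ 2 =
      10 * ⟪De, Du⟫ - 4 * ⟪De, Dv⟫ - ‖Dv - (2 : ℝ) • De‖ ^ 2 - 4 * ‖Du‖ ^ 2 := by
    simp only [← real_inner_self_eq_norm_sq, inner_sub_left, inner_sub_right,
      real_inner_smul_left, real_inner_smul_right, real_inner_comm De]
    ring
  have mass_nonneg := sq_nonneg ‖u - (2 : ℝ) • v + w - e‖
  have gradient_nonneg : 0 ≤ ν * τ / 6 * (‖Dv - (2 : ℝ) • De‖ ^ 2 + 4 * ‖Du‖ ^ 2) := by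
    positivity
  rw [sub_sub_cancel]
  rw [mass_u, mass_v] at mass_gap
  linear_combination mass_gap + ν * τ / 6 * gradient_gap + mass_nonneg / 4 + gradient_nonneg
    + 5 / 4 * sq_nonneg ‖e‖

lemma bdf2Energy_sub_le_of_velocityStep {τ ν ξ : ℝ} (hτ : 0 < τ) (hν : 0 ≤ ν)
    {u v w h N Δh Δe G : H} {Du Dv Dh : K}
    (predictor : (2 * τ)⁻¹ • ((3 : ℝ) • h - (4 : ℝ) • v + w) + ξ • N = ν • Δh)
    (corrector : (3 / (2 * τ)) • (u - h) + G = ν • Δe)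
    (green_h : ⟪Δh, h⟫ = -⟪Dh, Dh⟫)
    (green_u : ⟪Δe, u⟫ = -⟪Du - Dh, Du⟫) (green_v : ⟪Δe, v⟫ = -⟪Du - Dh, Dv⟫)
    (orth_u : ⟪G, u⟫ = 0) (orth_v : ⟪G, v⟫ = 0) :
    bdf2Energy u v - bdf2Energy v w
        + ν * τ / 6 * (‖Du‖ ^ 2 - ‖Dv‖ ^ 2 + ‖Du - Dh‖ ^ 2 + ‖Dh‖ ^ 2) ≤ -(τ * ξ) * ⟪N, h⟫ := by
  have tested_corrector : ∀ {z : H} {Dz : K}, ⟪Δe, z⟫ = -⟪Du - Dh, Dz⟫ → ⟪G, z⟫ = 0 →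
      3 / (2 * τ) * ⟪u - h, z⟫ + ν * ⟪Du - Dh, Dz⟫ = 0 := by
    intro z Dz green orth
    have := congrArg (⟪·, z⟫) corrector
    simp only [inner_add_left, real_inner_smul_left, green, orth] at this
    linarith
  have tested_predictor : ⟪(3 : ℝ) • h - (4 : ℝ) • v + w, h⟫ / 2 + ν * τ * ‖Dh‖ ^ 2 =
      -(τ * ξ) * ⟪N, h⟫ := by
    have := congrArg (⟪·, h⟫) predictor
    rw [inner_add_left, real_inner_smul_left, real_inner_smul_left, real_inner_smul_left, green_h,
      real_inner_self_eq_norm_sq] at this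
    field_simp at this ⊢
    linarith
  exact tested_predictor ▸ bdf2Energy_sub_le_of_projection hτ hν
    (tested_corrector green_u orth_u) (tested_corrector green_v orth_v)

end Hilbert

section Calculus

variable {d : ℕ} {a b : Fin d → ℝ}

lemma continuous_pd {f : (Fin d → ℝ) → ℝ} (hf : ContDiff ℝ 1 f) (i : Fin d) :
    Continuous (pd i f) :=
  (hf.continuous_fderiv one_ne_zero).clm_apply continuous_const

lemma contDiff_pd {f : (Fin d → ℝ) → ℝ} {n : WithTop ℕ∞} (hf : ContDiff ℝ (n + 1) f) (i : Fin d) :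
    ContDiff ℝ n (pd i f) :=
  (hf.fderiv_right le_rfl).clm_apply contDiff_const

lemma continuous_lap {f : (Fin d → ℝ) → ℝ} (hf : ContDiff ℝ 2 f) : Continuous (lap f) :=
  continuous_finsetSum _ fun i _ => continuous_pd (contDiff_pd hf i) i

lemma continuous_vdiv {u : (Fin d → ℝ) → Fin d → ℝ} (hu : ContDiff ℝ 1 u) : Continuous (vdiv u) :=
  continuous_finsetSum _ fun i _ => continuous_pd (contDiff_pi.1 hu i) i

lemma continuous_convect {u v : (Fin d → ℝ) → Fin d → ℝ} (hu : Continuous u)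
    (hv : ContDiff ℝ 1 v) : Continuous (convect u v) :=
  continuous_pi fun i => continuous_finsetSum _ fun j _ =>
    (continuous_pi_iff.1 hu j).mul (continuous_pd (contDiff_pi.1 hv i) j)

lemma pd_sub {f g : (Fin d → ℝ) → ℝ} {x : Fin d → ℝ} (hf : DifferentiableAt ℝ f x)
    (hg : DifferentiableAt ℝ g x) (i : Fin d) :
    pd i (fun y => f y - g y) x = pd i f x - pd i g x := by
  simp [pd, fderiv_fun_sub hf hg]

lemma pd_const_mul {f : (Fin d → ℝ) → ℝ} {x : Fin d → ℝ} (hf : DifferentiableAt ℝ f x) (c : ℝ)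
    (i : Fin d) : pd i (fun y => c * f y) x = c * pd i f x := by
  simp [pd, fderiv_const_mul hf]

lemma pd_mul {f g : (Fin d → ℝ) → ℝ} {x : Fin d → ℝ} (hf : DifferentiableAt ℝ f x)
    (hg : DifferentiableAt ℝ g x) (i : Fin d) :
    pd i (fun y => f y * g y) x = pd i f x * g x + f x * pd i g x := by
  simp only [pd, fderiv_fun_mul hf hg, add_apply, smul_apply, smul_eq_mul]
  ring

lemma pd_sstar {f g : (Fin d → ℝ) → ℝ} {x : Fin d → ℝ} (hf : DifferentiableAt ℝ f x)
    (hg : DifferentiableAt ℝ g x) (i : Fin d) :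
    pd i (sstar f g) x = 2 * pd i f x - pd i g x := by
  rw [← pd_const_mul hf, ← pd_sub (hf.const_mul 2) hg]
  rfl

lemma contDiff_sstar {f g : (Fin d → ℝ) → ℝ} {n : WithTop ℕ∞} (hf : ContDiff ℝ n f)
    (hg : ContDiff ℝ n g) : ContDiff ℝ n (sstar f g) :=
  (contDiff_const.mul hf).sub hg

lemma contDiff_vstar {u v : (Fin d → ℝ) → Fin d → ℝ} {n : WithTop ℕ∞} (hu : ContDiff ℝ n u)
    (hv : ContDiff ℝ n v) : ContDiff ℝ n (vstar u v) :=
  contDiff_pi.2 fun i => contDiff_sstar (contDiff_pi.1 hu i) (contDiff_pi.1 hv i)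

lemma vdiv_mul {u : (Fin d → ℝ) → Fin d → ℝ} {f : (Fin d → ℝ) → ℝ} {x : Fin d → ℝ}
    (hu : DifferentiableAt ℝ u x) (hf : DifferentiableAt ℝ f x) :
    vdiv (fun y i => u y i * f y) x = vdiv u x * f x + ∑ i, u x i * pd i f x := by
  simp only [vdiv, pd_mul (differentiableAt_pi.1 hu _) hf, sum_add_distrib, sum_mul]

lemma mem_frontier_Icc_of_eq {x : Fin d → ℝ} (hx : x ∈ Set.Icc a b) (i : Fin d)
    (h : x i = a i ∨ x i = b i) : x ∈ frontier (Set.Icc a b) := by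
  rw [isClosed_Icc.frontier_eq, ← Set.pi_univ_Icc, interior_pi_set Set.finite_univ]
  refine ⟨by rwa [Set.pi_univ_Icc], fun hi => ?_⟩
  have hxi : x i ∈ Set.Ioo (a i) (b i) := interior_Icc (a := a i) ▸ hi i (Set.mem_univ i)
  exact h.elim hxi.1.ne' hxi.2.ne

lemma integral_vdiv_eq_zero {u : (Fin d → ℝ) → Fin d → ℝ} (hu : ContDiff ℝ 1 u)
    (hbc : ∀ i, ∀ x ∈ Set.Icc a b, (x i = a i ∨ x i = b i) → u x i = 0) :
    ∫ x in Set.Icc a b, vdiv u x = 0 := by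
  by_cases hab : a ≤ b
  swap
  · simp [Set.Icc_eq_empty hab]
  cases d with
  | zero => simp [vdiv]
  | succ n =>
    have hu' := contDiff_pi.1 hu
    refine (integral_divergence_of_hasFDerivAt_off_countable' a b hab (fun i x => u x i)
      (fun i => fderiv ℝ fun x => u x i) ∅ Set.countable_empty
      (fun i => (hu' i).continuous.continuousOn)
      (fun x _ i => ((hu' i).differentiable one_ne_zero x).hasFDerivAt)
      ((continuous_vdiv hu).continuousOn.integrableOn_compact isCompact_Icc)).trans ?_
    have face_integral : ∀ i, ∀ c ∈ Set.Icc (a i) (b i), (c = a i ∨ c = b i) →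
        ∫ x in Set.Icc (a ∘ i.succAbove) (b ∘ i.succAbove), u (i.insertNth c x) i = 0 :=
      fun i c hc hface => setIntegral_eq_zero_of_forall_eq_zero fun x hx =>
        hbc i _ (Fin.insertNth_mem_Icc.2 ⟨hc, hx⟩) (by simpa using hface)
    refine sum_eq_zero fun i _ => ?_
    rw [face_integral i (b i) (Set.right_mem_Icc.2 (hab i)) (.inr rfl),
      face_integral i (a i) (Set.left_mem_Icc.2 (hab i)) (.inl rfl), sub_zero]

lemma integral_lap_mul {f g : (Fin d → ℝ) → ℝ} (hf : ContDiff ℝ 2 f) (hg : ContDiff ℝ 1 g)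
    (hbc : ∀ i, ∀ x ∈ Set.Icc a b, (x i = a i ∨ x i = b i) → pd i f x * g x = 0) :
    ∫ x in Set.Icc a b, lap f x * g x = -∫ x in Set.Icc a b, ∑ i, pd i f x * pd i g x := by
  have hgrad : ContDiff ℝ 1 fun x i => pd i f x := contDiff_pi.2 fun i => contDiff_pd hf i
  have lap_cont := continuous_lap hf
  have g_cont := hg.continuous
  have f_grad_cont := fun i => continuous_pd (hf.of_le one_le_two) i
  have g_grad_cont := fun i => continuous_pd hg i
  rw [eq_neg_iff_add_eq_zero,
    ← integral_add (Continuous.integrableOn_Icc (by fun_prop))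
      (Continuous.integrableOn_Icc (by fun_prop)),
    ← integral_vdiv_eq_zero (contDiff_pi.2 fun i => (contDiff_pd hf i).mul hg) hbc]
  simp only [vdiv_mul (hgrad.differentiable one_ne_zero _) (hg.differentiable one_ne_zero _)]
  rfl

lemma integral_mul_pd_eq_zero_of_vdiv_eq_zero {w : (Fin d → ℝ) → Fin d → ℝ}
    {p : (Fin d → ℝ) → ℝ} (hw : ContDiff ℝ 1 w) (hp : ContDiff ℝ 1 p)
    (hdiv : ∀ x ∈ Set.Icc a b, vdiv w x = 0)
    (hbc : ∀ i, ∀ x ∈ Set.Icc a b, (x i = a i ∨ x i = b i) → w x i = 0) :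
    ∫ x in Set.Icc a b, ∑ i, w x i * pd i p x = 0 := by
  rw [← integral_vdiv_eq_zero (contDiff_pi.2 fun i => (contDiff_pi.1 hw i).mul hp)
    fun i x hx h => by rw [hbc i x hx h, zero_mul]]
  refine setIntegral_congr_fun measurableSet_Icc fun x hx => ?_
  simp only [vdiv_mul (hw.differentiable one_ne_zero x) (hp.differentiable one_ne_zero x),
    hdiv x hx, zero_mul, zero_add]

end Calculus

section BoxL2

open scoped RealInnerProductSpace

variable {d : ℕ} {E : Type*} [NormedAddCommGroup E]

lemma memLp_restrict_of_isCompact {X : Type*} [TopologicalSpace X] [MeasurableSpace X]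
    [OpensMeasurableSpace X] [T2Space X] [SecondCountableTopologyEither X E] {μ : Measure X}
    [IsFiniteMeasureOnCompacts μ] {s : Set X} (hs : IsCompact s) {u : X → E} (hu : Continuous u)
    (p : ENNReal) : MemLp u p (μ.restrict s) := by
  obtain ⟨C, hC⟩ := hs.exists_bound_of_continuousOn hu.continuousOn
  have : IsFiniteMeasure (μ.restrict s) := isFiniteMeasure_restrict.2 hs.measure_lt_top.ne
  exact .of_bound hu.aestronglyMeasurable C (ae_restrict_of_forall_mem hs.measurableSet hC)

variable [InnerProductSpace ℝ E]

/-- The class in `L²(Ω; E)`, `Ω = [a, b]`, of a continuous function defined on the whole space. The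
scheme is tested, and the energies are computed, in these Hilbert spaces. -/
def boxL2 (a b : Fin d → ℝ) :
    C(Fin d → ℝ, E) →ₗ[ℝ] Lp E 2 (volume.restrict (Set.Icc a b)) where
  toFun u := (memLp_restrict_of_isCompact isCompact_Icc u.continuous 2).toLp u
  map_add' _ _ := rfl
  map_smul' _ _ := rfl

lemma coeFn_boxL2 (a b : Fin d → ℝ) (u : C(Fin d → ℝ, E)) :
    boxL2 a b u =ᵐ[volume.restrict (Set.Icc a b)] u :=
  MemLp.coeFn_toLp (memLp_restrict_of_isCompact isCompact_Icc u.continuous 2)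

lemma boxL2_congr {a b : Fin d → ℝ} {u v : C(Fin d → ℝ, E)} (h : Set.EqOn u v (Set.Icc a b)) :
    boxL2 a b u = boxL2 a b v :=
  MemLp.toLp_congr (memLp_restrict_of_isCompact isCompact_Icc u.continuous 2)
    (memLp_restrict_of_isCompact isCompact_Icc v.continuous 2)
    (ae_restrict_of_forall_mem measurableSet_Icc h)

lemma inner_boxL2 (a b : Fin d → ℝ) (u v : C(Fin d → ℝ, E)) :
    ⟪boxL2 a b u, boxL2 a b v⟫ = ∫ x in Set.Icc a b, ⟪u x, v x⟫ := by
  rw [L2.inner_def]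
  refine integral_congr_ae ?_
  filter_upwards [coeFn_boxL2 a b u, coeFn_boxL2 a b v] with x hu hv
  rw [hu, hv]

lemma norm_boxL2_sq (a b : Fin d → ℝ) (u : C(Fin d → ℝ, E)) :
    ‖boxL2 a b u‖ ^ 2 = ∫ x in Set.Icc a b, ‖u x‖ ^ 2 := by
  simp only [← real_inner_self_eq_norm_sq, inner_boxL2]

lemma bdf2Energy_boxL2 (a b : Fin d → ℝ) (u v : C(Fin d → ℝ, E)) :
    bdf2Energy (boxL2 a b u) (boxL2 a b v) =
      ((∫ x in Set.Icc a b, ‖u x‖ ^ 2) + ∫ x in Set.Icc a b, ‖(2 : ℝ) • u x - v x‖ ^ 2) / 4 := by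
  rw [bdf2Energy, ← map_smul, ← map_sub, norm_boxL2_sq, norm_boxL2_sq]
  rfl

end BoxL2

section Fields

open scoped RealInnerProductSpace

variable {d : ℕ} {a b : Fin d → ℝ}

/-- A continuous vector field with values in Euclidean space, so that its pointwise norm is the
Euclidean one and not the sup norm of `Fin d → ℝ`. -/
def fieldMap {u : (Fin d → ℝ) → Fin d → ℝ} (hu : Continuous u) :
    C(Fin d → ℝ, EuclideanSpace ℝ (Fin d)) :=
  ⟨fun x => WithLp.toLp 2 (u x), by fun_prop⟩

/-- The gradient of a `C¹` function, as a continuous Euclidean vector field. -/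
def gradMap {f : (Fin d → ℝ) → ℝ} (hf : ContDiff ℝ 1 f) :
    C(Fin d → ℝ, EuclideanSpace ℝ (Fin d)) :=
  fieldMap (continuous_pi (continuous_pd hf))

/-- The Jacobian of a `C¹` vector field, as a continuous matrix field: row `i` is the gradient of
the `i`-th component, and the pointwise norm is the Frobenius norm. -/
def jacMap {u : (Fin d → ℝ) → Fin d → ℝ} (hu : ContDiff ℝ 1 u) :
    C(Fin d → ℝ, PiLp 2 fun _ : Fin d => EuclideanSpace ℝ (Fin d)) :=
  ⟨fun x => WithLp.toLp 2 fun i => gradMap (contDiff_pi.1 hu i) x,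
    (PiLp.continuous_toLp 2 _).comp (continuous_pi fun _ => ContinuousMap.continuous _)⟩

lemma jacMap_sub {u v : (Fin d → ℝ) → Fin d → ℝ} (hu : ContDiff ℝ 1 u) (hv : ContDiff ℝ 1 v) :
    jacMap (hu.sub hv) = jacMap hu - jacMap hv := by
  ext x i j
  exact pd_sub ((contDiff_pi.1 hu i).differentiable one_ne_zero x)
    ((contDiff_pi.1 hv i).differentiable one_ne_zero x) j

lemma inner_boxL2_real {f g : (Fin d → ℝ) → ℝ} (hf : Continuous f) (hg : Continuous g) :
    ⟪boxL2 a b ⟨f, hf⟩, boxL2 a b ⟨g, hg⟩⟫ = ∫ x in Set.Icc a b, f x * g x := by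
  simp [inner_boxL2, mul_comm]

lemma inner_boxL2_fieldMap {u v : (Fin d → ℝ) → Fin d → ℝ} (hu : Continuous u)
    (hv : Continuous v) :
    ⟪boxL2 a b (fieldMap hu), boxL2 a b (fieldMap hv)⟫ =
      ∫ x in Set.Icc a b, ∑ i, u x i * v x i := by
  simp [inner_boxL2, fieldMap, PiLp.inner_apply, mul_comm]

lemma inner_boxL2_gradMap {f g : (Fin d → ℝ) → ℝ} (hf : ContDiff ℝ 1 f) (hg : ContDiff ℝ 1 g) :
    ⟪boxL2 a b (gradMap hf), boxL2 a b (gradMap hg)⟫ =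
      ∫ x in Set.Icc a b, ∑ i, pd i f x * pd i g x :=
  inner_boxL2_fieldMap _ _

lemma inner_boxL2_jacMap {u v : (Fin d → ℝ) → Fin d → ℝ} (hu : ContDiff ℝ 1 u)
    (hv : ContDiff ℝ 1 v) :
    ⟪boxL2 a b (jacMap hu), boxL2 a b (jacMap hv)⟫ =
      ∫ x in Set.Icc a b, ∑ i, ∑ j, pd j (fun y => u y i) x * pd j (fun y => v y i) x := by
  simp [inner_boxL2, jacMap, gradMap, fieldMap, PiLp.inner_apply, mul_comm]

lemma norm_boxL2_gradMap_sq {f : (Fin d → ℝ) → ℝ} (hf : ContDiff ℝ 1 f) :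
    ‖boxL2 a b (gradMap hf)‖ ^ 2 = ∫ x in Set.Icc a b, ∑ i, (pd i f x) ^ 2 := by
  rw [← real_inner_self_eq_norm_sq, inner_boxL2_gradMap]
  simp only [sq]

lemma norm_boxL2_jacMap_sq {u : (Fin d → ℝ) → Fin d → ℝ} (hu : ContDiff ℝ 1 u) :
    ‖boxL2 a b (jacMap hu)‖ ^ 2 =
      ∫ x in Set.Icc a b, ∑ i, ∑ j, (pd j (fun y => u y i) x) ^ 2 := by
  rw [← real_inner_self_eq_norm_sq, inner_boxL2_jacMap]
  simp only [sq]

lemma bdf2Energy_boxL2_real {f g : (Fin d → ℝ) → ℝ} (hf : Continuous f) (hg : Continuous g) :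
    bdf2Energy (boxL2 a b ⟨f, hf⟩) (boxL2 a b ⟨g, hg⟩) =
      ((∫ x in Set.Icc a b, (f x) ^ 2) + ∫ x in Set.Icc a b, (sstar f g x) ^ 2) / 4 := by
  simp [bdf2Energy_boxL2, sstar]

lemma bdf2Energy_boxL2_fieldMap {u v : (Fin d → ℝ) → Fin d → ℝ} (hu : Continuous u)
    (hv : Continuous v) :
    bdf2Energy (boxL2 a b (fieldMap hu)) (boxL2 a b (fieldMap hv)) =
      ((∫ x in Set.Icc a b, ∑ i, (u x i) ^ 2)
        + ∫ x in Set.Icc a b, ∑ i, (2 * u x i - v x i) ^ 2) / 4 := by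
  simp [bdf2Energy_boxL2, fieldMap, EuclideanSpace.real_norm_sq_eq]

lemma bdf2Energy_boxL2_gradMap {f g : (Fin d → ℝ) → ℝ} (hf : ContDiff ℝ 1 f)
    (hg : ContDiff ℝ 1 g) :
    bdf2Energy (boxL2 a b (gradMap hf)) (boxL2 a b (gradMap hg)) =
      ((∫ x in Set.Icc a b, ∑ i, (pd i f x) ^ 2)
        + ∫ x in Set.Icc a b, ∑ i, (pd i (sstar f g) x) ^ 2) / 4 := by
  simp only [pd_sstar (hf.differentiable one_ne_zero _) (hg.differentiable one_ne_zero _)]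
  exact bdf2Energy_boxL2_fieldMap _ _

lemma inner_boxL2_lap {f g : (Fin d → ℝ) → ℝ} (hf : ContDiff ℝ 2 f) (hg : ContDiff ℝ 1 g)
    (hbc : ∀ i, ∀ x ∈ Set.Icc a b, (x i = a i ∨ x i = b i) → pd i f x * g x = 0) :
    ⟪boxL2 a b ⟨lap f, continuous_lap hf⟩, boxL2 a b ⟨g, hg.continuous⟩⟫ =
      -⟪boxL2 a b (gradMap (hf.of_le one_le_two)), boxL2 a b (gradMap hg)⟫ := by
  rw [inner_boxL2_real, inner_boxL2_gradMap, integral_lap_mul hf hg hbc]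

lemma continuous_vectorLap {u : (Fin d → ℝ) → Fin d → ℝ} (hu : ContDiff ℝ 2 u) :
    Continuous fun x i => lap (fun y => u y i) x :=
  continuous_pi fun i => continuous_lap (contDiff_pi.1 hu i)

lemma inner_boxL2_vectorLap {u v : (Fin d → ℝ) → Fin d → ℝ} (hu : ContDiff ℝ 2 u)
    (hv : ContDiff ℝ 1 v) (hbc : ∀ x ∈ frontier (Set.Icc a b), v x = 0) :
    ⟪boxL2 a b (fieldMap (continuous_vectorLap hu)), boxL2 a b (fieldMap hv.continuous)⟫ =
      -⟪boxL2 a b (jacMap (hu.of_le one_le_two)), boxL2 a b (jacMap hv)⟫ := by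
  have v_cont := fun i => (contDiff_pi.1 hv i).continuous
  have lap_cont := fun i => continuous_lap (contDiff_pi.1 hu i)
  have u_grad_cont := fun i => continuous_pd (contDiff_pi.1 (hu.of_le one_le_two) i)
  have v_grad_cont := fun i => continuous_pd (contDiff_pi.1 hv i)
  rw [inner_boxL2_fieldMap, inner_boxL2_jacMap,
    integral_finsetSum _ fun i _ => Continuous.integrableOn_Icc (by fun_prop),
    integral_finsetSum _ fun i _ => Continuous.integrableOn_Icc (by fun_prop),
    ← sum_neg_distrib]
  refine sum_congr rfl fun i _ => integral_lap_mul (contDiff_pi.1 hu i) (contDiff_pi.1 hv i) ?_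
  intro j x hx hface
  simp [hbc x (mem_frontier_Icc_of_eq hx j hface)]

lemma inner_boxL2_gradMap_eq_zero_of_vdiv_eq_zero {p : (Fin d → ℝ) → ℝ}
    {w : (Fin d → ℝ) → Fin d → ℝ} (hp : ContDiff ℝ 1 p) (hw : ContDiff ℝ 1 w)
    (hdiv : ∀ x ∈ Set.Icc a b, vdiv w x = 0) (hbc : ∀ x ∈ frontier (Set.Icc a b), w x = 0) :
    ⟪boxL2 a b (gradMap hp), boxL2 a b (fieldMap hw.continuous)⟫ = 0 := by
  rw [real_inner_comm, gradMap, inner_boxL2_fieldMap]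
  refine integral_mul_pd_eq_zero_of_vdiv_eq_zero hw hp hdiv fun i x hx hface => ?_
  rw [hbc x (mem_frontier_Icc_of_eq hx i hface), Pi.zero_apply]

end Fields

section Scheme

open scoped RealInnerProductSpace

variable {d : ℕ} {a b : Fin d → ℝ}

lemma bdf2Energy_sub_le_of_cahnHilliard {τ M lam β ξ : ℝ} (hτ : 0 < τ) (hlam : 0 ≤ lam)
    (hβ : 0 ≤ β) {φ ψ χ μ f g : (Fin d → ℝ) → ℝ} (hφ : ContDiff ℝ 2 φ) (hψ : ContDiff ℝ 1 ψ)
    (hχ : ContDiff ℝ 1 χ) (hμ : ContDiff ℝ 2 μ) (hf : Continuous f) (hg : Continuous g)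
    (eq_φ : ∀ x ∈ Set.Icc a b,
      (3 * φ x - 4 * ψ x + χ x) / (2 * τ) + ξ * g x = M * lap μ x)
    (eq_μ : ∀ x ∈ Set.Icc a b, μ x = -lam * lap φ x + lam * β * φ x + lam * ξ * f x)
    (hφbc : neumannBC a b φ) (hμbc : neumannBC a b μ) :
    lam * (bdf2Energy (boxL2 a b (gradMap (hφ.of_le one_le_two))) (boxL2 a b (gradMap hψ))
          - bdf2Energy (boxL2 a b (gradMap hψ)) (boxL2 a b (gradMap hχ)))
        + lam * β * (bdf2Energy (boxL2 a b ⟨φ, hφ.continuous⟩) (boxL2 a b ⟨ψ, hψ.continuous⟩)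
          - bdf2Energy (boxL2 a b ⟨ψ, hψ.continuous⟩) (boxL2 a b ⟨χ, hχ.continuous⟩)) ≤
      -(M * τ) * (∫ x in Set.Icc a b, ∑ i, (pd i μ x) ^ 2)
        - τ * ξ * (lam * (∫ x in Set.Icc a b, f x * ((3 * φ x - 4 * ψ x + χ x) / (2 * τ)))
          + ∫ x in Set.Icc a b, μ x * g x) := by
  have eq_φ_L2 := boxL2_congr (u := (2 * τ)⁻¹ • ((3 : ℝ) • ⟨φ, hφ.continuous⟩
    - (4 : ℝ) • ⟨ψ, hψ.continuous⟩ + ⟨χ, hχ.continuous⟩) + ξ • ⟨g, hg⟩)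
    (v := M • ⟨lap μ, continuous_lap hμ⟩) (a := a) (b := b) fun x hx => by
      simpa [div_eq_inv_mul, mul_add] using eq_φ x hx
  have eq_μ_L2 := boxL2_congr (u := ⟨μ, hμ.continuous⟩) (v := -lam • ⟨lap φ, continuous_lap hφ⟩
    + (lam * β) • ⟨φ, hφ.continuous⟩ + (lam * ξ) • ⟨f, hf⟩) (a := a) (b := b) fun x hx => by
      simpa using eq_μ x hx
  simp only [map_add, map_sub, map_smul] at eq_φ_L2 eq_μ_L2
  have green {θ η : (Fin d → ℝ) → ℝ} (hθ : ContDiff ℝ 2 θ) (hη : ContDiff ℝ 1 η)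
      (hbc : neumannBC a b θ) := inner_boxL2_lap hθ hη fun i x hx hface => by
    rw [hbc i x hx hface, zero_mul]
  have energy_le := bdf2Energy_sub_le_of_phaseField hτ hlam hβ eq_φ_L2 eq_μ_L2
    (green hφ (hφ.of_le one_le_two) hφbc) (green hφ hψ hφbc) (green hφ hχ hφbc)
    (green hμ (hμ.of_le one_le_two) hμbc)
  rw [norm_boxL2_gradMap_sq] at energy_le
  simp only [← map_add, ← map_sub, ← map_smul, inner_boxL2] at energy_le
  simpa [div_eq_inv_mul, mul_add, mul_comm] using energy_le

lemma bdf2Energy_sub_le_of_navierStokes {τ ν ξ : ℝ} (hτ : 0 < τ) (hν : 0 ≤ ν)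
    {u v w h N : (Fin d → ℝ) → Fin d → ℝ} {q : (Fin d → ℝ) → ℝ}
    (hu : ContDiff ℝ 2 u) (hv : ContDiff ℝ 1 v) (hw : Continuous w) (hh : ContDiff ℝ 2 h)
    (hN : Continuous N) (hq : ContDiff ℝ 1 q)
    (predictor : ∀ x ∈ Set.Icc a b, ∀ i,
      (3 * h x i - 4 * v x i + w x i) / (2 * τ) + ξ * N x i = ν * lap (fun y => h y i) x)
    (corrector : ∀ x ∈ Set.Icc a b, ∀ i,
      3 / (2 * τ) * (u x i - h x i) + pd i q x = ν * lap (fun y => u y i - h y i) x)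
    (hudiv : ∀ x ∈ Set.Icc a b, vdiv u x = 0) (hvdiv : ∀ x ∈ Set.Icc a b, vdiv v x = 0)
    (hubc : ∀ x ∈ frontier (Set.Icc a b), u x = 0) (hvbc : ∀ x ∈ frontier (Set.Icc a b), v x = 0)
    (hhbc : ∀ x ∈ frontier (Set.Icc a b), h x = 0) :
    bdf2Energy (boxL2 a b (fieldMap hu.continuous)) (boxL2 a b (fieldMap hv.continuous))
        - bdf2Energy (boxL2 a b (fieldMap hv.continuous)) (boxL2 a b (fieldMap hw))
        + ν * τ / 6 * ((∫ x in Set.Icc a b, ∑ i, ∑ j, (pd j (fun y => u y i) x) ^ 2)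
          - (∫ x in Set.Icc a b, ∑ i, ∑ j, (pd j (fun y => v y i) x) ^ 2)
          + (∫ x in Set.Icc a b, ∑ i, ∑ j, (pd j (fun y => u y i - h y i) x) ^ 2)
          + ∫ x in Set.Icc a b, ∑ i, ∑ j, (pd j (fun y => h y i) x) ^ 2) ≤
      -(τ * ξ) * ∫ x in Set.Icc a b, ∑ i, N x i * h x i := by
  have predictor_L2 := boxL2_congr (u := (2 * τ)⁻¹ • ((3 : ℝ) • fieldMap hh.continuous
    - (4 : ℝ) • fieldMap hv.continuous + fieldMap hw) + ξ • fieldMap hN)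
    (v := ν • fieldMap (continuous_vectorLap hh)) (a := a) (b := b) fun x hx => by
      ext i
      simpa [fieldMap, div_eq_inv_mul, mul_add] using predictor x hx i
  have corrector_L2 := boxL2_congr (u := (3 / (2 * τ)) •
    (fieldMap hu.continuous - fieldMap hh.continuous) + gradMap hq)
    (v := ν • fieldMap (continuous_vectorLap (hu.sub hh))) (a := a) (b := b) fun x hx => by
      ext i
      simpa [gradMap, fieldMap] using corrector x hx i
  simp only [map_add, map_sub, map_smul] at predictor_L2 corrector_L2
  have hu₁ := hu.of_le one_le_two
  have hh₁ := hh.of_le one_le_two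
  have jac_sub : boxL2 a b (jacMap (hu₁.sub hh₁)) =
      boxL2 a b (jacMap hu₁) - boxL2 a b (jacMap hh₁) := by
    rw [jacMap_sub, map_sub]
  have energy_le := bdf2Energy_sub_le_of_velocityStep hτ hν predictor_L2 corrector_L2
    (inner_boxL2_vectorLap hh hh₁ hhbc)
    (jac_sub ▸ inner_boxL2_vectorLap (hu.sub hh) hu₁ hubc)
    (jac_sub ▸ inner_boxL2_vectorLap (hu.sub hh) hv hvbc)
    (inner_boxL2_gradMap_eq_zero_of_vdiv_eq_zero hq hu₁ hudiv hubc)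
    (inner_boxL2_gradMap_eq_zero_of_vdiv_eq_zero hq hv hvdiv hvbc)
  rw [← jac_sub] at energy_le
  simp only [norm_boxL2_jacMap_sq, inner_boxL2_fieldMap] at energy_le
  exact energy_le

lemma bdf2Energy_sub_le_of_auxiliaryVariable {τ lam S T R Q P : ℝ} (hτ : 0 < τ) (hlam : 0 < lam)
    (hS : S ≠ 0) (eq_R : (3 * R - 4 * Q + P) / (2 * τ) = T / (2 * lam * S)) :
    2 * lam * (bdf2Energy R Q - bdf2Energy Q P) ≤ τ * (R / S) * T :=
  calc 2 * lam * (bdf2Energy R Q - bdf2Energy Q P)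
      ≤ 2 * lam * (R * (3 * R - 4 * Q + P) / 2) := by
        gcongr
        exact bdf2Energy_sub_le R Q P
    _ = τ * (R / S) * T := by
        field_simp at eq_R ⊢
        linear_combination R * eq_R

/-- The explicit terms `(u·∇)u + φ∇μ + γ∇p` of the momentum equation, which the scheme evaluates at
the extrapolated fields. -/
def explicitForce (γ : ℝ) (u : (Fin d → ℝ) → Fin d → ℝ) (φ μ p : (Fin d → ℝ) → ℝ)
    (x : Fin d → ℝ) (i : Fin d) : ℝ :=
  convect u u x i + φ x * pd i μ x + γ * pd i p x

lemma continuous_explicitForce (γ : ℝ) {u : (Fin d → ℝ) → Fin d → ℝ} {φ μ p : (Fin d → ℝ) → ℝ}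
    (hu : ContDiff ℝ 1 u) (hφ : Continuous φ) (hμ : ContDiff ℝ 1 μ) (hp : ContDiff ℝ 1 p) :
    Continuous (explicitForce γ u φ μ p) := by
  have convect_cont := continuous_pi_iff.1 (continuous_convect hu.continuous hu)
  have grad_μ_cont := continuous_pd hμ
  have grad_p_cont := continuous_pd hp
  unfold explicitForce
  fun_prop

lemma integral_explicitForce_mul (γ : ℝ) {u v : (Fin d → ℝ) → Fin d → ℝ}
    {φ μ p : (Fin d → ℝ) → ℝ} (hu : ContDiff ℝ 1 u) (hφ : Continuous φ) (hμ : ContDiff ℝ 1 μ)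
    (hp : ContDiff ℝ 1 p) (hv : Continuous v) :
    ∫ x in Set.Icc a b, ∑ i, explicitForce γ u φ μ p x i * v x i =
      (∫ x in Set.Icc a b, ∑ i, v x i * (φ x * pd i μ x)) + trib (Set.Icc a b) u u v
        + γ * ∫ x in Set.Icc a b, ∑ i, pd i p x * v x i := by
  have convect_cont := continuous_pi_iff.1 (continuous_convect hu.continuous hu)
  have grad_μ_cont := continuous_pd hμ
  have grad_p_cont := continuous_pd hp
  rw [trib, ← integral_const_mul, ← integral_add (Continuous.integrableOn_Icc (by fun_prop))
    (Continuous.integrableOn_Icc (by fun_prop)), ← integral_add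
    (Continuous.integrableOn_Icc (by fun_prop)) (Continuous.integrableOn_Icc (by fun_prop))]
  congr! 2 with x
  rw [mul_sum, ← sum_add_distrib, ← sum_add_distrib]
  congr! 1 with i
  rw [explicitForce]
  ring

/-- The discrete modified energy `Ẽ` of the scheme on `Ω`, where `(u, v)`, `(φ, ψ)` and `(R, Q)` are
the values of velocity, phase field and auxiliary variable at two consecutive time levels, the newer
one first. -/
def modifiedEnergy (Ω : Set (Fin d → ℝ)) (lam β ν τ : ℝ) (u v : (Fin d → ℝ) → Fin d → ℝ)
    (φ ψ : (Fin d → ℝ) → ℝ) (R Q : ℝ) : ℝ :=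
  1 / 4 * ((∫ x in Ω, ∑ i, (u x i) ^ 2) + (∫ x in Ω, ∑ i, (2 * u x i - v x i) ^ 2))
    + lam / 4 * ((∫ x in Ω, ∑ i, (pd i φ x) ^ 2) + (∫ x in Ω, ∑ i, (pd i (sstar φ ψ) x) ^ 2))
    + lam * β / 4 * ((∫ x in Ω, (φ x) ^ 2) + (∫ x in Ω, (sstar φ ψ x) ^ 2))
    + lam / 2 * (R ^ 2 + (2 * R - Q) ^ 2)
    + ν * τ / 6 * ∫ x in Ω, ∑ i, ∑ j, (pd j (fun y => u y i) x) ^ 2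

lemma modifiedEnergy_eq (lam β ν τ R Q : ℝ) {u v : (Fin d → ℝ) → Fin d → ℝ}
    {φ ψ : (Fin d → ℝ) → ℝ} (hu : Continuous u) (hv : Continuous v) (hφ : ContDiff ℝ 1 φ)
    (hψ : ContDiff ℝ 1 ψ) :
    modifiedEnergy (Set.Icc a b) lam β ν τ u v φ ψ R Q =
      bdf2Energy (boxL2 a b (fieldMap hu)) (boxL2 a b (fieldMap hv))
        + lam * bdf2Energy (boxL2 a b (gradMap hφ)) (boxL2 a b (gradMap hψ))
        + lam * β * bdf2Energy (boxL2 a b ⟨φ, hφ.continuous⟩) (boxL2 a b ⟨ψ, hψ.continuous⟩)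
        + 2 * lam * bdf2Energy R Q
        + ν * τ / 6 * ∫ x in Set.Icc a b, ∑ i, ∑ j, (pd j (fun y => u y i) x) ^ 2 := by
  have bdf2Energy_real : bdf2Energy R Q = (R ^ 2 + (2 * R - Q) ^ 2) / 4 := by simp [bdf2Energy]
  rw [bdf2Energy_boxL2_fieldMap, bdf2Energy_boxL2_gradMap, bdf2Energy_boxL2_real, bdf2Energy_real,
    modifiedEnergy]
  ring

theorem stmt3_general {τ M lam ν β γ S R Q P : ℝ} (hτ : 0 < τ) (hlam : 0 < lam) (hν : 0 ≤ ν)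
    (hβ : 0 ≤ β) (hS : S ≠ 0) {f : ℝ → ℝ} {φ ψ χ μ p φs μs ps : (Fin d → ℝ) → ℝ}
    {u v w h us : (Fin d → ℝ) → Fin d → ℝ} (hf : Continuous f)
    (hφ : ContDiff ℝ 2 φ) (hψ : ContDiff ℝ 1 ψ) (hχ : ContDiff ℝ 1 χ) (hμ : ContDiff ℝ 2 μ)
    (hp : ContDiff ℝ 1 p) (hu : ContDiff ℝ 2 u) (hv : ContDiff ℝ 1 v) (hw : Continuous w)
    (hh : ContDiff ℝ 2 h) (hφs : ContDiff ℝ 1 φs) (hμs : ContDiff ℝ 1 μs) (hps : ContDiff ℝ 1 ps)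
    (hus : ContDiff ℝ 1 us)
    (eq_φ : ∀ x ∈ Set.Icc a b, (3 * φ x - 4 * ψ x + χ x) / (2 * τ)
      + R / S * vdiv (fun y i => us y i * φs y) x = M * lap μ x)
    (eq_μ : ∀ x ∈ Set.Icc a b,
      μ x = -lam * lap φ x + lam * β * φ x + lam * (R / S) * f (φs x))
    (predictor : ∀ x ∈ Set.Icc a b, ∀ i, (3 * h x i - 4 * v x i + w x i) / (2 * τ)
      + R / S * convect us us x i - ν * lap (fun y => h y i) x
      = -(R / S) * (φs x * pd i μs x + γ * pd i ps x))
    (corrector : ∀ x ∈ Set.Icc a b, ∀ i, 3 / (2 * τ) * (u x i - h x i)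
      - ν * lap (fun y => u y i - h y i) x + pd i p x = γ * pd i ps x)
    (hudiv : ∀ x ∈ Set.Icc a b, vdiv u x = 0) (hvdiv : ∀ x ∈ Set.Icc a b, vdiv v x = 0)
    (hφbc : neumannBC a b φ) (hμbc : neumannBC a b μ)
    (hhbc : ∀ x ∈ frontier (Set.Icc a b), h x = 0)
    (hubc : ∀ x ∈ frontier (Set.Icc a b), u x = 0) (hvbc : ∀ x ∈ frontier (Set.Icc a b), v x = 0)
    (eq_R : (3 * R - 4 * Q + P) / (2 * τ) =
      (lam * (∫ x in Set.Icc a b, f (φs x) * ((3 * φ x - 4 * ψ x + χ x) / (2 * τ)))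
        + (∫ x in Set.Icc a b, μ x * vdiv (fun y i => us y i * φs y) x)
        + (∫ x in Set.Icc a b, ∑ i, h x i * (φs x * pd i μs x))
        + trib (Set.Icc a b) us us h
        + γ * (∫ x in Set.Icc a b, ∑ i, pd i ps x * h x i)) / (2 * lam * S)) :
    modifiedEnergy (Set.Icc a b) lam β ν τ u v φ ψ R Q
        - modifiedEnergy (Set.Icc a b) lam β ν τ v w ψ χ Q P ≤
      -(M * τ) * (∫ x in Set.Icc a b, ∑ i, (pd i μ x) ^ 2)
        - ν * τ / 6 * ((∫ x in Set.Icc a b, ∑ i, ∑ j, (pd j (fun y => u y i - h y i) x) ^ 2)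
          + ∫ x in Set.Icc a b, ∑ i, ∑ j, (pd j (fun y => h y i) x) ^ 2) := by
  have phase_le := bdf2Energy_sub_le_of_cahnHilliard hτ hlam.le hβ hφ hψ hχ hμ
    (hf.comp hφs.continuous)
    (continuous_vdiv (contDiff_pi.2 fun i => (contDiff_pi.1 hus i).mul hφs)) eq_φ eq_μ hφbc hμbc
  have pressure_grad (x : Fin d → ℝ) (i : Fin d) :
      pd i (fun y => p y - γ * ps y) x = pd i p x - γ * pd i ps x := by
    have hps_diff := hps.differentiable one_ne_zero x
    rw [pd_sub (hp.differentiable one_ne_zero x) (hps_diff.const_mul γ), pd_const_mul hps_diff]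
  have velocity_le := bdf2Energy_sub_le_of_navierStokes (ξ := R / S) hτ hν hu hv hw hh
    (continuous_explicitForce γ hus hφs.continuous hμs hps) (hp.sub (contDiff_const.mul hps))
    (fun x hx i => by rw [explicitForce]; linear_combination predictor x hx i)
    (fun x hx i => by rw [pressure_grad]; linear_combination corrector x hx i)
    hudiv hvdiv hubc hvbc hhbc
  rw [integral_explicitForce_mul γ hus hφs.continuous hμs hps hh.continuous] at velocity_le
  have scalar_le := bdf2Energy_sub_le_of_auxiliaryVariable hτ hlam hS eq_R
  rw [modifiedEnergy_eq lam β ν τ R Q hu.continuous hv.continuous (hφ.of_le one_le_two) hψ,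
    modifiedEnergy_eq lam β ν τ Q P hv.continuous hw hψ hχ]
  simp only [Function.comp_apply] at phase_le
  linarith

end Scheme

/-- Unconditional energy dissipation of the second-order (BDF2) structure-preserving
IVS scheme (Theorem 3.3, second part). -/
theorem stmt3 (d : ℕ) (hd : 1 ≤ d) (a b : Fin d → ℝ) (hab : ∀ i, a i < b i)
    (Ω : Set (Fin d → ℝ)) (hΩ : Ω = Set.Icc a b)
    (τ M lam ν ε δ₀ β : ℝ)
    (hτ : 0 < τ) (hM : 0 < M) (hlam : 0 < lam) (hν : 0 < ν) (hε : 0 < ε)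
    (hδ₀ : 0 < δ₀) (hβ : 0 ≤ β)
    (γs Rnm1 Rn Rn1 ξ : ℝ)
    (φnm1 φn φn1 μnm1 μn μn1 pnm1 pn : (Fin d → ℝ) → ℝ)
    (pn1 : (Fin d → ℝ) → ℝ)
    (unm1 un un1 uhat1 : (Fin d → ℝ) → Fin d → ℝ)
    (hφnm1 : ContDiff ℝ 2 φnm1) (hφn : ContDiff ℝ 2 φn) (hφn1 : ContDiff ℝ 2 φn1)
    (hμnm1 : ContDiff ℝ 2 μnm1) (hμn : ContDiff ℝ 2 μn) (hμn1 : ContDiff ℝ 2 μn1)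
    (hpnm1 : ContDiff ℝ 2 pnm1) (hpn : ContDiff ℝ 2 pn) (hpn1 : ContDiff ℝ 1 pn1)
    (hunm1 : ContDiff ℝ 2 unm1) (hun : ContDiff ℝ 2 un) (hun1 : ContDiff ℝ 2 un1)
    (huhat1 : ContDiff ℝ 2 uhat1)
    (hE1pos : 0 < E1 Ω ε β (sstar φn φnm1) + δ₀)
    (hξ : ξ = Rn1 / Real.sqrt (E1 Ω ε β (sstar φn φnm1) + δ₀))
    -- (i) discrete Cahn–Hilliard equation
    (heq1 : ∀ x ∈ Ω,
      (3 * φn1 x - 4 * φn x + φnm1 x) / (2 * τ)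
        + ξ * vdiv (fun y i => vstar un unm1 y i * sstar φn φnm1 y) x
        = M * lap μn1 x)
    -- (ii) chemical potential
    (heq2 : ∀ x ∈ Ω,
      μn1 x = -lam * lap φn1 x + lam * β * φn1 x
        + lam * ξ * Fprime ε β (sstar φn φnm1 x))
    -- (iii) intermediate velocity
    (heq3 : ∀ x ∈ Ω, ∀ i : Fin d,
      (3 * uhat1 x i - 4 * un x i + unm1 x i) / (2 * τ)
        + ξ * convect (vstar un unm1) (vstar un unm1) x i
        - ν * lap (fun y => uhat1 y i) x
        = -ξ * (sstar φn φnm1 x * pd i (sstar μn μnm1) x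
            + γs * pd i (sstar pn pnm1) x))
    -- (iv) correction step
    (heq4 : ∀ x ∈ Ω, ∀ i : Fin d,
      (3 / (2 * τ)) * (un1 x i - uhat1 x i)
        - ν * lap (fun y => un1 y i - uhat1 y i) x + pd i pn1 x
        = γs * pd i (sstar pn pnm1) x)
    -- (v) incompressibility
    (heq5 : ∀ x ∈ Ω, vdiv un1 x = 0 ∧ vdiv un x = 0 ∧ vdiv unm1 x = 0)
    -- boundary conditions
    (hφbc : neumannBC a b φn1) (hμbc : neumannBC a b μn1)
    (huhatbc : ∀ x ∈ frontier Ω, uhat1 x = 0)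
    (hun1bc : ∀ x ∈ frontier Ω, un1 x = 0)
    (hunbc : ∀ x ∈ frontier Ω, un x = 0)
    (hunm1bc : ∀ x ∈ frontier Ω, unm1 x = 0)
    -- scalar auxiliary-variable relation
    (heqR : (3 * Rn1 - 4 * Rn + Rnm1) / (2 * τ) =
      (lam * (∫ x in Ω, Fprime ε β (sstar φn φnm1 x)
              * ((3 * φn1 x - 4 * φn x + φnm1 x) / (2 * τ)))
        + (∫ x in Ω, μn1 x * vdiv (fun y i => vstar un unm1 y i * sstar φn φnm1 y) x)
        + (∫ x in Ω, ∑ i, uhat1 x i * (sstar φn φnm1 x * pd i (sstar μn μnm1) x))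
        + trib Ω (vstar un unm1) (vstar un unm1) uhat1
        + γs * (∫ x in Ω, ∑ i, pd i (sstar pn pnm1) x * uhat1 x i))
      / (2 * lam * Real.sqrt (E1 Ω ε β (sstar φn φnm1) + δ₀))) :
    -- discrete modified energy dissipation law
    ((1/4) * ((∫ x in Ω, ∑ i, (un1 x i)^2) + (∫ x in Ω, ∑ i, (2 * un1 x i - un x i)^2))
      + (lam/4) * ((∫ x in Ω, ∑ i, (pd i φn1 x)^2)
          + (∫ x in Ω, ∑ i, (pd i (sstar φn1 φn) x)^2))
      + (lam * β / 4) * ((∫ x in Ω, (φn1 x)^2) + (∫ x in Ω, (sstar φn1 φn x)^2))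
      + (lam/2) * (Rn1^2 + (2 * Rn1 - Rn)^2)
      + (ν * τ / 6) * (∫ x in Ω, ∑ i, ∑ j, (pd j (fun y => un1 y i) x)^2))
    - ((1/4) * ((∫ x in Ω, ∑ i, (un x i)^2) + (∫ x in Ω, ∑ i, (2 * un x i - unm1 x i)^2))
      + (lam/4) * ((∫ x in Ω, ∑ i, (pd i φn x)^2)
          + (∫ x in Ω, ∑ i, (pd i (sstar φn φnm1) x)^2))
      + (lam * β / 4) * ((∫ x in Ω, (φn x)^2) + (∫ x in Ω, (sstar φn φnm1 x)^2))
      + (lam/2) * (Rn^2 + (2 * Rn - Rnm1)^2)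
      + (ν * τ / 6) * (∫ x in Ω, ∑ i, ∑ j, (pd j (fun y => un y i) x)^2))
    ≤ -(M * τ) * (∫ x in Ω, ∑ i, (pd i μn1 x)^2)
      - (ν * τ / 6) * ((∫ x in Ω, ∑ i, ∑ j, (pd j (fun y => un1 y i - uhat1 y i) x)^2)
        + (∫ x in Ω, ∑ i, ∑ j, (pd j (fun y => uhat1 y i) x)^2)) := by
  subst hΩ hξ
  exact stmt3_general hτ hlam hν.le hβ (Real.sqrt_pos.2 hE1pos).ne' (f := Fprime ε β)
    (by unfold Fprime; fun_prop) hφn1 (hφn.of_le one_le_two) (hφnm1.of_le one_le_two) hμn1 hpn1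
    hun1 (hun.of_le one_le_two) hunm1.continuous huhat1
    ((contDiff_sstar hφn hφnm1).of_le one_le_two) ((contDiff_sstar hμn hμnm1).of_le one_le_two)
    ((contDiff_sstar hpn hpnm1).of_le one_le_two) ((contDiff_vstar hun hunm1).of_le one_le_two)
    heq1 heq2 heq3 heq4 (fun x hx => (heq5 x hx).1) (fun x hx => (heq5 x hx).2.1)
    hφbc hμbc huhatbc hun1bc hunbc heqR
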